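/- Let m ≥ 2 and let η = e^{πi/m}, ζ = e^{2πi/m}. Define the oriented chain W(π/m) = H(π/m) − H(−π/m) in C, where H(θ) is the ray R_{≥0}·e^{iθ} oriented away from the origin. For β ∈ C with β^m = −1, let Λ_β ⊂ C^2 be the line z' = βz. Then the local intersection number at the origin of the 2-chain W(π/m) × W(π/m) with Λ_β equals 1 if β = η, equals −1 if β = η^{-1}, and equals 0 otherwise. -/

import Mathlib

open scoped Classical

lemma aux_sectors (A B A' B' E : ℝ) (hE : E = A' * B - A * B')
    (h1 : A = 0 → B < 0) (h2 : B = 0 → A < 0) (h3 : A' = 0 → B' < 0) (h4 : B' = 0 → A' < 0)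
    (h5 : A * A' < 0 → B * B' < 0 → E ≠ 0) :
    (if A * A' < 0 ∧ 0 < A' * E then Real.sign (-A') else 0)
      - (if B * B' < 0 ∧ B' * E < 0 then Real.sign B' else 0)
      = (if 0 < A ∧ 0 < B then 1 else 0) - (if 0 < A' ∧ 0 < B' then 1 else 0) := by
  have tri : ∀ x : ℝ, (x < 0 ∧ ¬ 0 < x ∧ x.sign = -1) ∨ (x = 0 ∧ ¬ x < 0 ∧ ¬ 0 < x) ∨
      (0 < x ∧ ¬ x < 0 ∧ x.sign = 1) := by
    intro x
    rcases lt_trichotomy x 0 with h | h | h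
    · exact Or.inl ⟨h, h.not_gt, Real.sign_of_neg h⟩
    · exact Or.inr (Or.inl ⟨h, by simp [h], by simp [h]⟩)
    · exact Or.inr (Or.inr ⟨h, h.not_gt, Real.sign_of_pos h⟩)
  rw [Real.sign_neg]
  simp only [mul_pos_iff, mul_neg_iff] at h5 ⊢
  rcases tri A with ⟨hA, qA, tA⟩ | ⟨hA, qA, tA⟩ | ⟨hA, qA, tA⟩ <;>
  rcases tri B with ⟨hB, qB, tB⟩ | ⟨hB, qB, tB⟩ | ⟨hB, qB, tB⟩ <;>
  first
  | (exfalso; first | linarith [h1 hA] | linarith [h2 hB])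
  | skip
  all_goals
    rcases tri A' with ⟨hA', qA', tA'⟩ | ⟨hA', qA', tA'⟩ | ⟨hA', qA', tA'⟩ <;>
    rcases tri B' with ⟨hB', qB', tB'⟩ | ⟨hB', qB', tB'⟩ | ⟨hB', qB', tB'⟩ <;>
    first
    | (exfalso; first | linarith [h3 hA'] | linarith [h4 hB'])
    | skip
  all_goals
    rcases tri E with ⟨hE', qE, tE⟩ | ⟨hE', qE, tE⟩ | ⟨hE', qE, tE⟩ <;>
    first
    | (simp [hA, hB, hA', hB', hE', qA, qB, qA', qB', qE, tA', tB']; done)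
    | (exfalso; simp only [hA, hB, hA', hB', hE', true_and, and_true, true_or, or_true,
        ne_eq, not_true_eq_false, forall_const] at h5; done)
    | (exfalso; nlinarith)

lemma aux_root (m : ℕ) (hm : 2 ≤ m) (z : ℂ) (hz : z ^ m = 1)
    (hA : 0 < Real.sin (Real.pi / m) * z.re - Real.cos (Real.pi / m) * z.im)
    (hB : 0 < Real.sin (Real.pi / m) * z.re + Real.cos (Real.pi / m) * z.im) : z = 1 := by
  have hm0 : m ≠ 0 := by omega
  have hmp : (0:ℝ) < m := by positivity
  have : NeZero m := ⟨hm0⟩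
  obtain ⟨k, hk, rfl⟩ := (Complex.isPrimitiveRoot_exp m hm0).eq_pow_of_pow_eq_one hz
  rcases Nat.eq_zero_or_pos k with h0 | h0
  · simp [h0]
  exfalso
  have e : Complex.exp (2 * Real.pi * Complex.I / m) ^ k
      = Complex.exp (((2 * k * (Real.pi / m) : ℝ) : ℂ) * Complex.I) := by
    rw [← Complex.exp_nat_mul]; congr 1; push_cast; ring
  rw [e, Complex.exp_ofReal_mul_I_re, Complex.exp_ofReal_mul_I_im] at hA hB
  set t := Real.pi / m with ht
  have htp : 0 < t := by positivity
  have hmt : m * t = Real.pi := by rw [ht]; field_simp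
  have hA' : Real.sin (2 * k * t - t) < 0 := by rw [Real.sin_sub]; linarith
  have hB' : 0 < Real.sin (2 * k * t + t) := by rw [Real.sin_add]; linarith
  have hk1 : (1:ℝ) ≤ k := by exact_mod_cast h0
  have hk2 : (k:ℝ) + 1 ≤ m := by exact_mod_cast hk
  rcases le_or_gt (2 * k) (m + 1) with h | h
  · have : (2:ℝ) * k ≤ m + 1 := by exact_mod_cast h
    have := Real.sin_nonneg_of_nonneg_of_le_pi (x := 2 * k * t - t) (by nlinarith) (by nlinarith)
    linarith
  · have : (m:ℝ) + 1 ≤ 2 * k := by exact_mod_cast h.le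
    have h7 := Real.sin_nonneg_of_nonneg_of_le_pi (x := 2 * k * t + t - Real.pi)
      (by nlinarith) (by nlinarith)
    rw [Real.sin_sub_pi] at h7
    linarith

/-- crossing sum for a ray `c + r w` -/
def hit (w v c : ℂ) : Prop := ∃ r s : ℝ, 0 < r ∧ 0 < s ∧ (s : ℂ) * v = r * w + c

lemma aux_hit (a b : ℝ) (hb : 0 < b) (w c : ℂ) :
    (if hit w ⟨a, b⟩ c then Real.sign (-(b * w.re - a * w.im)) else 0)
    = if (b * c.re - a * c.im) * (b * w.re - a * w.im) < 0 ∧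
        0 < (b * w.re - a * w.im) * (w.re * c.im - c.re * w.im) then
        Real.sign (-(b * w.re - a * w.im)) else 0 := by
  set A' := b * w.re - a * w.im with hA'
  by_cases h0 : A' = 0
  · simp [h0]
  congr 1
  apply propext
  constructor
  · rintro ⟨r, s, hr, hs, h⟩
    have h1 := congrArg Complex.re h
    have h2 := congrArg Complex.im h
    simp at h1 h2
    have e : b * c.re - a * c.im = - r * A' := by
      rw [hA']; linear_combination a * h2 - b * h1
    have e2 : A' * (w.re * c.im - c.re * w.im) = s * (A' * A') := by
      rw [hA']; linear_combination (b * w.re - a * w.im) * (-w.re * h2 + w.im * h1)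
    have : 0 < A' * A' := mul_self_pos.mpr h0
    rw [e, e2]
    constructor
    · nlinarith
    · positivity
  · rintro ⟨h1, h2⟩
    have hpos : 0 < A' * A' := mul_self_pos.mpr h0
    refine ⟨-(b * c.re - a * c.im) / A', (w.re * c.im - c.re * w.im) / A', ?_, ?_, ?_⟩
    · rw [← mul_div_mul_right _ _ h0]; apply div_pos _ hpos; linarith
    · rw [← mul_div_mul_right _ _ h0]; apply div_pos _ hpos; linarith
    · apply Complex.ext
      · simp; field_simp; rw [hA']; ring
      · simp; field_simp; rw [hA']; ring

lemma hit_conj (w v c : ℂ) :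
    hit (starRingEnd ℂ w) (starRingEnd ℂ v) (starRingEnd ℂ c) ↔ hit w v c := by
  unfold hit
  constructor
  · rintro ⟨r, s, hr, hs, h⟩
    refine ⟨r, s, hr, hs, ?_⟩
    have := congrArg (starRingEnd ℂ) h
    simpa using this
  · rintro ⟨r, s, hr, hs, h⟩
    refine ⟨r, s, hr, hs, ?_⟩
    have := congrArg (starRingEnd ℂ) h
    simpa using this

lemma aux_ray (a b : ℝ) (ha : 0 ≤ a) (hb : 0 < b) (w c : ℂ)
    (hc1 : ∀ s : ℝ, 0 ≤ s → c ≠ s * ⟨a, b⟩) (hc2 : ∀ s : ℝ, 0 ≤ s → c ≠ s * ⟨a, -b⟩)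
    (hw1 : ∀ s : ℝ, 0 ≤ s → w ≠ s * ⟨a, b⟩) (hw2 : ∀ s : ℝ, 0 ≤ s → w ≠ s * ⟨a, -b⟩)
    (hcw : ∀ r : ℝ, 0 ≤ r → r * w + c ≠ 0) :
    (if hit w ⟨a, b⟩ c then Real.sign (-(b * w.re - a * w.im)) else 0)
     - (if hit w ⟨a, -b⟩ c then Real.sign (b * w.re + a * w.im) else 0)
     = (if 0 < b * c.re - a * c.im ∧ 0 < b * c.re + a * c.im then (1:ℝ) else 0)
      - (if 0 < b * w.re - a * w.im ∧ 0 < b * w.re + a * w.im then 1 else 0) := by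
  have on1 : ∀ z : ℂ, (∀ s : ℝ, 0 ≤ s → z ≠ s * ⟨a, b⟩) → b * z.re - a * z.im = 0 →
      z.im < 0 := by
    intro z hz h
    by_contra! h'
    apply hz (z.im / b) (by positivity)
    apply Complex.ext <;> simp <;> field_simp
    linarith
  have on2 : ∀ z : ℂ, (∀ s : ℝ, 0 ≤ s → z ≠ s * ⟨a, -b⟩) → b * z.re + a * z.im = 0 →
      0 < z.im := by
    intro z hz h
    by_contra! h'
    apply hz (-z.im / b) (div_nonneg (by linarith) hb.le)
    apply Complex.ext <;> simp <;> field_simp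
    linarith
  have k2 : (if hit w ⟨a, -b⟩ c then Real.sign (b * w.re + a * w.im) else 0)
    = if (b * c.re + a * c.im) * (b * w.re + a * w.im) < 0 ∧
        (b * w.re + a * w.im) * (w.re * c.im - c.re * w.im) < 0 then
        Real.sign (b * w.re + a * w.im) else 0 := by
    have := aux_hit a b hb (starRingEnd ℂ w) (starRingEnd ℂ c)
    have hv : (⟨a, b⟩ : ℂ) = starRingEnd ℂ ⟨a, -b⟩ := by apply Complex.ext <;> simp
    rw [hv, hit_conj] at this
    simp only [Complex.conj_re, Complex.conj_im, Real.sign_neg] at this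
    have q : ∀ (p q : Prop) [Decidable p] [Decidable q] (x : ℝ), (if p then -x else 0) = (if q then -x else 0) →
       (if p then x else 0) = (if q then x else 0) := by
      intro p q _ _ x; split_ifs <;> simp <;> intro h <;> linarith
    have := q _ _ _ this
    rw [show b * w.re - a * -w.im = b * w.re + a * w.im by ring,
      show b * c.re - a * -c.im = b * c.re + a * c.im by ring] at this
    rw [this]
    congr 2
    apply propext
    constructor <;> intro h <;> nlinarith
  rw [aux_hit a b hb, k2]
  have par : (b * c.re - a * c.im) * (b * w.re - a * w.im) < 0 →
      w.re * c.im - c.re * w.im ≠ 0 := by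
    intro h hF
    have h0 : b * w.re - a * w.im ≠ 0 := by rintro h0; simp [h0] at h
    have hpos : 0 < (b * w.re - a * w.im) * (b * w.re - a * w.im) := mul_self_pos.mpr h0
    apply hcw (-(b * c.re - a * c.im) / (b * w.re - a * w.im))
    · rw [← mul_div_mul_right _ _ h0]; apply div_nonneg _ hpos.le; linarith
    · apply Complex.ext
      · rw [Complex.add_re, Complex.re_ofReal_mul, Complex.zero_re]; field_simp
        linear_combination a * hF
      · rw [Complex.add_im, Complex.im_ofReal_mul, Complex.zero_im]; field_simp
        linear_combination b * hF
  have c1 := on1 c hc1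
  have c2 := on2 c hc2
  have w1 := on1 w hw1
  have w2 := on2 w hw2
  rcases ha.eq_or_lt with ha0 | ha0
  · subst ha0
    simp only [zero_mul, sub_zero, add_zero, and_self] at *
    have cn : b * c.re ≠ 0 := fun h => by linarith [c1 h, c2 h]
    have wn : b * w.re ≠ 0 := fun h => by linarith [w1 h, w2 h]
    generalize b * c.re = A at *
    generalize b * w.re = A' at *
    generalize w.re * c.im - c.re * w.im = F at *
    rw [Real.sign_neg]
    rcases lt_or_gt_of_ne cn with h | h <;> rcases lt_or_gt_of_ne wn with h' | h'
    · simp [(mul_pos_of_neg_of_neg h h').not_gt, h.not_gt, h'.not_gt]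
    · have p := mul_neg_of_neg_of_pos h h'
      rcases lt_or_gt_of_ne (par p) with hF | hF
      · simp [p, h.not_gt, h', Real.sign_of_pos, hF, mul_pos_iff, mul_neg_iff, hF.not_gt, h'.not_gt]
      · simp [p, h.not_gt, h', Real.sign_of_pos, hF, mul_pos_iff, mul_neg_iff, hF.not_gt, h'.not_gt]
    · have p := mul_neg_of_pos_of_neg h h'
      rcases lt_or_gt_of_ne (par p) with hF | hF
      · simp [p, h, h', Real.sign_of_neg, hF, mul_pos_iff, mul_neg_iff, hF.not_gt, h'.not_gt]
      · simp [p, h, h', Real.sign_of_neg, hF, mul_pos_iff, mul_neg_iff, hF.not_gt, h'.not_gt]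
    · simp [(mul_pos h h').not_gt, h, h']
  · have key := aux_sectors (b * c.re - a * c.im) (b * c.re + a * c.im)
      (b * w.re - a * w.im) (b * w.re + a * w.im)
      (2 * (a * b) * (w.re * c.im - c.re * w.im)) (by ring)
      (fun h => by nlinarith [c1 h]) (fun h => by nlinarith [c2 h])
      (fun h => by nlinarith [w1 h]) (fun h => by nlinarith [w2 h])
      (fun h _ => mul_ne_zero (by positivity) (par h))
    rw [← key]
    have hab : 0 < 2 * (a * b) := by positivity
    have s1 : ∀ x F : ℝ, 0 < x * (2 * (a * b) * F) ↔ 0 < x * F := by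
      intro x F
      rw [show x * (2 * (a * b) * F) = (2 * (a * b)) * (x * F) by ring]
      exact mul_pos_iff_of_pos_left hab
    have s2 : ∀ x F : ℝ, x * (2 * (a * b) * F) < 0 ↔ x * F < 0 := by
      intro x F
      rw [show x * (2 * (a * b) * F) = (2 * (a * b)) * (x * F) by ring]
      constructor <;> intro h <;> nlinarith
    simp only [s1, s2]

/-- The part of the intersection lying on the product of the open rays through `u` and `v`. -/
def piece (β c u v : ℂ) : Set (ℂ × ℂ) :=
  {p | ∃ r s : ℝ, 0 < r ∧ 0 < s ∧ p.1 = r * u ∧ p.2 = s * v ∧ p.2 = β * p.1 + c}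

lemma piece_nonempty (β c u v : ℂ) : (piece β c u v).Nonempty ↔ hit (β * u) v c := by
  constructor
  · rintro ⟨⟨p, q⟩, r, s, hr, hs, h1, h2, h3⟩
    refine ⟨r, s, hr, hs, ?_⟩
    simp only at h1 h2 h3
    rw [← h2, h3, h1]; ring
  · rintro ⟨r, s, hr, hs, h⟩
    refine ⟨(r * u, s * v), r, s, hr, hs, rfl, rfl, ?_⟩
    simp only
    rw [h]; ring

lemma piece_sum (β c u v : ℂ) (wt : ℂ × ℂ → ℝ) (σ : ℝ)
    (h : ∀ p ∈ piece β c u v,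
      wt p = σ * Real.sign (v.re * (β * u).im - v.im * (β * u).re)) :
    ∑ᶠ p ∈ piece β c u v, wt p
      = σ * if hit (β * u) v c then Real.sign (v.re * (β * u).im - v.im * (β * u).re) else 0 := by
  by_cases hD : v.re * (β * u).im - v.im * (β * u).re = 0
  · rw [hD] at h ⊢
    simp only [Real.sign_zero, mul_zero, ite_self] at h ⊢
    rw [finsum_mem_congr rfl h]
    simp
  · rw [← piece_nonempty]
    by_cases hne : (piece β c u v).Nonempty
    · rw [if_pos hne]
      obtain ⟨p, hp⟩ := hne
      have : piece β c u v = {p} := by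
        apply Set.eq_singleton_iff_unique_mem.mpr ⟨hp, ?_⟩
        intro q hq
        obtain ⟨r, s, hr, hs, h1, h2, h3⟩ := hp
        obtain ⟨r', s', hr', hs', h1', h2', h3'⟩ := hq
        have e : (s : ℂ) * v = r * (β * u) + c := by rw [← h2, h3, h1]; ring
        have e' : (s' : ℂ) * v = r' * (β * u) + c := by rw [← h2', h3', h1']; ring
        have er := congrArg Complex.re e
        have ei := congrArg Complex.im e
        have er' := congrArg Complex.re e'
        have ei' := congrArg Complex.im e'
        rw [Complex.add_re, Complex.re_ofReal_mul, Complex.re_ofReal_mul] at er er'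
        rw [Complex.add_im, Complex.im_ofReal_mul, Complex.im_ofReal_mul] at ei ei'
        have k1 : (r' - r) * (v.re * (β * u).im - v.im * (β * u).re) = 0 := by
          linear_combination v.im * (er' - er) - v.re * (ei' - ei)
        have k2 : (s' - s) * (v.re * (β * u).im - v.im * (β * u).re) = 0 := by
          linear_combination (β * u).im * (er' - er) - (β * u).re * (ei' - ei)
        have k1' : r' = r := by
          rcases mul_eq_zero.mp k1 with h | h
          · linarith
          · exact absurd h hD
        have k2' : s' = s := by
          rcases mul_eq_zero.mp k2 with h | h
          · linarith
          · exact absurd h hD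
        apply Prod.ext
        · rw [h1, h1', k1']
        · rw [h2, h2', k2']
      rw [this, finsum_mem_singleton, h p hp]
    · rw [if_neg hne, Set.not_nonempty_iff_eq_empty.mp hne]
      simp

/-- Let `η = e^{πi/m}` and let `W = W(π/m)` be the chain `H(π/m) - H(-π/m)` in `ℂ`, where
`H(θ)` is the ray `ℝ_{≥0}·e^{iθ}` oriented away from the origin. For `β` with `β^m = -1`, the
local intersection number at the origin of the `2`-chain `W(π/m) × W(π/m)` with the line
`Λ_β = {z' = βz}` equals `1` if `β = η`, `-1` if `β = η⁻¹`, and `0` otherwise: for every small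
generic translation `Λ_β + (0,c)`, the signed (by orientations) count of the transverse
intersection points equals this value. -/
theorem stmt_17 (m : ℕ) (hm : 2 ≤ m) (β : ℂ) (hβ : β ^ m = -1) :
    let η : ℂ := Complex.exp ((Real.pi : ℂ) * Complex.I / (m : ℂ))
    let Hray : ℂ → Set ℂ := fun u => {z | ∃ r : ℝ, 0 ≤ r ∧ z = (r : ℂ) * u}
    let W : Set ℂ := Hray η ∪ Hray η⁻¹
    let dir : ℂ → ℂ := fun z => if z ∈ Hray η then η else η⁻¹
    let sgn : ℂ → ℝ := fun z => if z ∈ Hray η then 1 else -1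
    let wt : ℂ × ℂ → ℝ := fun p =>
      sgn p.1 * sgn p.2 *
        Real.sign
          (Matrix.det
            !![1, 0, β.re, β.im;
               0, 1, -β.im, β.re;
               (dir p.1).re, (dir p.1).im, 0, 0;
               0, 0, (dir p.2).re, (dir p.2).im])
    ∃ ε₀ > (0 : ℝ), ∀ c : ℂ, 0 < ‖c‖ → ‖c‖ < ε₀ →
      ∀ T : Set (ℂ × ℂ), T = {p | p.2 = β * p.1 + c ∧ p.1 ∈ W ∧ p.2 ∈ W} →
        T.Finite → (∀ p ∈ T, p.1 ≠ 0 ∧ p.2 ≠ 0) →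
        ∑ᶠ p ∈ T, wt p = if β = η then 1 else if β = η⁻¹ then -1 else 0 := by
  intro η Hray W dir sgn wt
  refine ⟨1, one_pos, ?_⟩
  intro c _ _ T hT hfin hgen
  have hm0 : m ≠ 0 := by omega
  have hmp : (0:ℝ) < m := by positivity
  have hm2 : (2:ℝ) ≤ m := by exact_mod_cast hm
  set a := Real.cos (Real.pi / m) with ha_def
  set b := Real.sin (Real.pi / m) with hb_def
  have hpi := Real.pi_pos
  have hle : Real.pi / m ≤ Real.pi / 2 := by gcongr
  have htp : 0 < Real.pi / m := by positivity
  have ha : 0 ≤ a := Real.cos_nonneg_of_neg_pi_div_two_le_of_le (by linarith) hle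
  have hb : 0 < b := Real.sin_pos_of_pos_of_lt_pi htp (by linarith)
  have hab : a * a + b * b = 1 := by
    have := Real.cos_sq_add_sin_sq (Real.pi / m)
    rw [← ha_def, ← hb_def] at this
    linarith
  have hη : η = ⟨a, b⟩ := by
    have : η = Complex.exp (((Real.pi / m : ℝ) : ℂ) * Complex.I) := by
      simp only [η]; congr 1; push_cast; ring
    rw [this]
    apply Complex.ext
    · rw [Complex.exp_ofReal_mul_I_re]
    · rw [Complex.exp_ofReal_mul_I_im]
  have hηne : η ≠ 0 := Complex.exp_ne_zero _
  have hηi : η⁻¹ = ⟨a, -b⟩ := by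
    apply inv_eq_of_mul_eq_one_left
    rw [hη]
    apply Complex.ext <;> simp <;> linarith
  have hηm : η ^ m = -1 := by
    simp only [η]
    rw [← Complex.exp_nat_mul, mul_div_cancel₀ _ (by exact_mod_cast hm0), Complex.exp_pi_mul_I]
  have hη' : η⁻¹ ≠ η := by
    rw [hη] at hηi ⊢; rw [hηi]
    intro h
    have := congrArg Complex.im h
    simp at this
    linarith
  have mem1 : ∀ r : ℝ, 0 < r → (r : ℂ) * η ∈ Hray η := fun r hr => ⟨r, hr.le, rfl⟩
  have mem2 : ∀ r : ℝ, 0 < r → (r : ℂ) * η⁻¹ ∉ Hray η := by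
    rintro r hr ⟨s, hs, h⟩
    rw [hηi, hη] at h
    have := congrArg Complex.im h
    simp at this
    nlinarith
  have hTU : T = (piece β c η η ∪ piece β c η η⁻¹) ∪ (piece β c η⁻¹ η ∪ piece β c η⁻¹ η⁻¹) := by
    ext p
    constructor
    · intro hp
      obtain ⟨g1, g2⟩ := hgen p hp
      rw [hT] at hp
      obtain ⟨h1, h2, h3⟩ := hp
      have pos : ∀ (r : ℝ) (z u : ℂ), 0 ≤ r → z = r * u → z ≠ 0 → 0 < r := by
        intro r z u h0 hz hne
        refine lt_of_le_of_ne h0 ?_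
        rintro rfl
        simp at hz
        exact hne hz
      rcases h2 with ⟨r, hr, h2⟩ | ⟨r, hr, h2⟩ <;> rcases h3 with ⟨s, hs, h3⟩ | ⟨s, hs, h3⟩
      · exact Or.inl (Or.inl ⟨r, s, pos _ _ _ hr h2 g1, pos _ _ _ hs h3 g2, h2, h3, h1⟩)
      · exact Or.inl (Or.inr ⟨r, s, pos _ _ _ hr h2 g1, pos _ _ _ hs h3 g2, h2, h3, h1⟩)
      · exact Or.inr (Or.inl ⟨r, s, pos _ _ _ hr h2 g1, pos _ _ _ hs h3 g2, h2, h3, h1⟩)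
      · exact Or.inr (Or.inr ⟨r, s, pos _ _ _ hr h2 g1, pos _ _ _ hs h3 g2, h2, h3, h1⟩)
    · rw [hT]
      rintro ((⟨r, s, hr, hs, h1, h2, h3⟩ | ⟨r, s, hr, hs, h1, h2, h3⟩) |
        (⟨r, s, hr, hs, h1, h2, h3⟩ | ⟨r, s, hr, hs, h1, h2, h3⟩))
      · exact ⟨h3, Or.inl ⟨r, hr.le, h1⟩, Or.inl ⟨s, hs.le, h2⟩⟩
      · exact ⟨h3, Or.inl ⟨r, hr.le, h1⟩, Or.inr ⟨s, hs.le, h2⟩⟩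
      · exact ⟨h3, Or.inr ⟨r, hr.le, h1⟩, Or.inl ⟨s, hs.le, h2⟩⟩
      · exact ⟨h3, Or.inr ⟨r, hr.le, h1⟩, Or.inr ⟨s, hs.le, h2⟩⟩
  have d2 : ∀ u, Disjoint (piece β c u η) (piece β c u η⁻¹) := by
    intro u
    rw [Set.disjoint_left]
    rintro p ⟨r, s, hr, hs, h1, h2, h3⟩ ⟨r', s', hr', hs', h1', h2', h3'⟩
    apply mem2 s' hs'
    rw [← h2', h2]
    exact mem1 s hs
  have d1 : Disjoint (piece β c η η ∪ piece β c η η⁻¹)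
      (piece β c η⁻¹ η ∪ piece β c η⁻¹ η⁻¹) := by
    have key : ∀ v v' p, p ∈ piece β c η v → p ∈ piece β c η⁻¹ v' → False := by
      rintro v v' p ⟨r, s, hr, hs, h1, h2, h3⟩ ⟨r', s', hr', hs', h1', h2', h3'⟩
      apply mem2 r' hr'
      rw [← h1', h1]
      exact mem1 r hr
    rw [Set.disjoint_left]
    rintro p (h | h) (h' | h') <;> exact key _ _ p h h'
  rw [hTU] at hfin
  have f1 := hfin.subset Set.subset_union_left
  have f2 := hfin.subset Set.subset_union_right
  rw [hTU, finsum_mem_union d1 f1 f2,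
    finsum_mem_union (d2 η) (f1.subset Set.subset_union_left) (f1.subset Set.subset_union_right),
    finsum_mem_union (d2 η⁻¹) (f2.subset Set.subset_union_left) (f2.subset Set.subset_union_right)]
  have hdet : ∀ u v : ℂ, Matrix.det
            !![1, 0, β.re, β.im;
               0, 1, -β.im, β.re;
               u.re, u.im, 0, 0;
               0, 0, v.re, v.im] = v.re * (β * u).im - v.im * (β * u).re := by
    intro u v
    rw [Complex.mul_re, Complex.mul_im]
    simp [Matrix.det_succ_row_zero, Fin.sum_univ_succ, Fin.succAbove]
    ring
  have sg1 : ∀ r : ℝ, 0 < r → sgn (r * η) = 1 ∧ dir (r * η) = η := fun r hr =>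
    ⟨if_pos (mem1 r hr), if_pos (mem1 r hr)⟩
  have sg2 : ∀ r : ℝ, 0 < r → sgn (r * η⁻¹) = -1 ∧ dir (r * η⁻¹) = η⁻¹ := fun r hr =>
    ⟨if_neg (mem2 r hr), if_neg (mem2 r hr)⟩
  have gen : ∀ (u v : ℂ) (σ τ : ℝ), (∀ r : ℝ, 0 < r → sgn (r * u) = σ ∧ dir (r * u) = u) →
      (∀ r : ℝ, 0 < r → sgn (r * v) = τ ∧ dir (r * v) = v) →
      ∑ᶠ p ∈ piece β c u v, wt p = (σ * τ) *
        if hit (β * u) v c then Real.sign (v.re * (β * u).im - v.im * (β * u).re) else 0 := by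
    intro u v σ τ hu hv
    apply piece_sum
    rintro p ⟨r, s, hr, hs, h1, h2, h3⟩
    simp only [wt]
    rw [h1, h2, (hu r hr).1, (hu r hr).2, (hv s hs).1, (hv s hs).2, hdet]
  rw [gen η η _ _ sg1 sg1, gen η η⁻¹ _ _ sg1 sg2, gen η⁻¹ η _ _ sg2 sg1,
    gen η⁻¹ η⁻¹ _ _ sg2 sg2]
  -- genericity of `c`
  have hW0 : (0 : ℂ) ∈ W := Or.inl ⟨0, le_rfl, by simp⟩
  have hcW : c ∉ W := by
    intro h
    have : ((0 : ℂ), c) ∈ T := by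
      rw [hT]; exact ⟨by simp, hW0, h⟩
    exact (hgen _ this).1 rfl
  have hc1 : ∀ s : ℝ, 0 ≤ s → c ≠ s * η := fun s hs h => hcW (Or.inl ⟨s, hs, h⟩)
  have hc2 : ∀ s : ℝ, 0 ≤ s → c ≠ s * η⁻¹ := fun s hs h => hcW (Or.inr ⟨s, hs, h⟩)
  have hcw : ∀ z ∈ W, β * z + c ≠ 0 := by
    intro z hz h
    have : (z, (0 : ℂ)) ∈ T := by
      rw [hT]; exact ⟨h.symm, hz, hW0⟩
    exact (hgen _ this).2 rfl
  -- the directions `β * u` are not on `W`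
  have hηn : ‖η‖ = 1 := by
    have : ‖η‖ ^ m = 1 := by rw [← norm_pow, hηm]; simp
    exact (pow_eq_one_iff_of_nonneg (norm_nonneg _) hm0).mp this
  have hβn : ‖β‖ = 1 := by
    have : ‖β‖ ^ m = 1 := by rw [← norm_pow, hβ]; simp
    exact (pow_eq_one_iff_of_nonneg (norm_nonneg _) hm0).mp this
  have hηim : (η⁻¹) ^ m = -1 := by rw [inv_pow, hηm]; norm_num
  have hηin : ‖η⁻¹‖ = 1 := by rw [norm_inv, hηn]; norm_num
  have hwW : ∀ u v : ℂ, u ^ m = -1 → v ^ m = -1 → ‖u‖ = 1 → ‖v‖ = 1 →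
      ∀ s : ℝ, 0 ≤ s → β * u ≠ s * v := by
    intro u v hu hv nu nv s hs h
    have hn := congrArg norm h
    rw [norm_mul, norm_mul, hβn, nu, nv, Complex.norm_real, Real.norm_of_nonneg hs] at hn
    have : s = 1 := by linarith
    subst this
    have := congrArg (· ^ m) h
    simp only [mul_pow, hβ, hu, hv] at this
    norm_num at this
  have ray : ∀ u : ℂ, (u ^ m = -1) → ‖u‖ = 1 → (∀ r : ℝ, 0 ≤ r → (r : ℂ) * u ∈ W) → _ :=
    fun u h1 h2 h3 => aux_ray a b ha hb (β * u) c
      (fun s hs => by rw [← hη]; exact hc1 s hs) (fun s hs => by rw [← hηi]; exact hc2 s hs)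
      (fun s hs => by rw [← hη]; exact hwW u η h1 hηm h2 hηn s hs)
      (fun s hs => by rw [← hηi]; exact hwW u η⁻¹ h1 hηim h2 hηin s hs)
      (fun r hr => by
        have := hcw _ (h3 r hr)
        rwa [show β * (r * u) = r * (β * u) by ring] at this)
  have r1 := ray η hηm hηn (fun r hr => Or.inl ⟨r, hr, rfl⟩)
  have r2 := ray η⁻¹ hηim hηin (fun r hr => Or.inr ⟨r, hr, rfl⟩)
  rw [← hη, ← hηi] at r1 r2
  have v1 : ∀ w : ℂ, η.re * w.im - η.im * w.re = -(b * w.re - a * w.im) := by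
    intro w; rw [hη]; simp only; ring
  have v2 : ∀ w : ℂ, (η⁻¹).re * w.im - (η⁻¹).im * w.re = b * w.re + a * w.im := by
    intro w; rw [hηi]; simp only; ring
  rw [v1, v2, v1, v2]
  -- which directions lie in the open sector
  have sect : ∀ z : ℂ, z ^ m = 1 →
      ((0 < b * z.re - a * z.im ∧ 0 < b * z.re + a * z.im) ↔ z = 1) := by
    intro z hz
    constructor
    · rintro ⟨h1, h2⟩
      exact aux_root m hm z hz h1 h2
    · rintro rfl
      simp [hb]
  have q1 : β * η = 1 ↔ β = η⁻¹ := by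
    exact ⟨fun h => eq_inv_of_mul_eq_one_left h, fun h => by rw [h]; exact inv_mul_cancel₀ hηne⟩
  have q2 : β * η⁻¹ = 1 ↔ β = η := by
    exact ⟨fun h => by rw [← mul_one η, ← h]; field_simp, fun h => by rw [h]; exact mul_inv_cancel₀ hηne⟩
  have s1 := sect (β * η) (by rw [mul_pow, hβ, hηm]; norm_num)
  have s2 := sect (β * η⁻¹) (by rw [mul_pow, hβ, hηim]; norm_num)
  rw [q1] at s1
  rw [q2] at s2
  simp only [s1] at r1
  simp only [s2] at r2
  have fin : (if β = η then (1:ℝ) else if β = η⁻¹ then -1 else 0)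
      = (if β = η then 1 else 0) - (if β = η⁻¹ then 1 else 0) := by
    by_cases h : β = η
    · have : β ≠ η⁻¹ := fun h' => hη' (h'.symm.trans h)
      simp [h, hη'.symm]
    · simp only [h, if_false]
      split_ifs <;> norm_num
  rw [fin]
  linear_combination r1 - r2
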